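/- Assume there exists an integer k ≥ 2 such that every admissible k-tuple of distinct integers contains a Dickson pair, i.e., two elements x_i ≠ x_j such that there are infinitely many integers n with n + x_i and n + x_j both prime. Then there exists a constant C > 0 such that for every real number x, the interval (x, x + C] contains a de Polignac number. -/

import Mathlib

/-- A `k`-tuple of integers is admissible if for every prime `p` its entries
do not cover all residue classes mod `p`. -/
def AdmissibleTuple {k : ℕ} (x : Fin k → ℤ) : Prop :=
  ∀ p : ℕ, p.Prime → ∃ r : ZMod p, ∀ i, (x i : ZMod p) ≠ r

/-- A de Polignac number: an integer `h` such that there are infinitely many primes `p`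
with `p + h` also prime. -/
def DePolignac (h : ℤ) : Prop :=
  {p : ℤ | Prime p ∧ Prime (p + h)}.Infinite

theorem depolignac_zero : DePolignac 0 := by
  have h := Nat.infinite_setOfPred_prime.image (f := fun n : ℕ => (n : ℤ)) Nat.cast_injective.injOn
  refine h.mono ?_
  rintro _ ⟨p, hp, rfl⟩
  have hp' : Prime (p : ℤ) := Nat.prime_iff_prime_int.mp hp
  exact ⟨hp', by simpa using hp'⟩

theorem depolignac_sub_of_infinite {a b : ℤ}
    (h : {n : ℤ | Prime (n + a) ∧ Prime (n + b)}.Infinite) : DePolignac (b - a) := by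
  refine (h.image (f := fun n => n + a) (add_left_injective a).injOn).mono ?_
  rintro _ ⟨n, ⟨ha, hb⟩, rfl⟩
  exact ⟨ha, by simpa using hb⟩

theorem DePolignac.neg {h : ℤ} (hh : DePolignac h) : DePolignac (-h) := by
  have := depolignac_sub_of_infinite (a := h) (b := 0)
    (hh.mono fun p hp => ⟨hp.2, by simpa using hp.1⟩)
  simpa using this

/-- Multiples of `k!` form an admissible `k`-tuple. -/
theorem admissibleTuple_factorial_mul {k : ℕ} (y : Fin k → ℤ) :
    AdmissibleTuple fun i => (k.factorial : ℤ) * y i := by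
  intro p hp
  have : Fact p.Prime := ⟨hp⟩
  rcases le_or_gt p k with hpk | hpk
  · refine ⟨1, fun i => ?_⟩
    have h0 : ((k.factorial : ℕ) : ZMod p) = 0 :=
      (ZMod.natCast_eq_zero_iff _ _).mpr (Nat.dvd_factorial hp.pos hpk)
    simp [h0]
  · by_contra! hcover
    have hle := Fintype.card_le_of_surjective
      (fun i => (((k.factorial : ℤ) * y i : ℤ) : ZMod p)) hcover
    rw [ZMod.card, Fintype.card_fin] at hle
    omega

/-- If every set avoiding the difference relation `D` has fewer than `k` elements, then finitely
many translates of `D` cover `ℤ`. -/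
theorem exists_finset_forall_exists_sub {D : ℤ → Prop} (h0 : D 0) (hneg : ∀ d, D d → D (-d))
    {k : ℕ} (hk : ∀ S : Finset ℤ, (∀ s ∈ S, ∀ t ∈ S, s ≠ t → ¬ D (s - t)) → S.card < k) :
    ∃ S : Finset ℤ, ∀ m, ∃ s ∈ S, D (m - s) := by
  classical
  let P : Set (Finset ℤ) := {S | ∀ s ∈ S, ∀ t ∈ S, s ≠ t → ¬ D (s - t)}
  have hP : P.Nonempty := ⟨∅, by simp [P]⟩
  let f : Finset ℤ → ℕ := fun S => k - S.card
  let S := Function.argminOn f P hP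
  have hS : S ∈ P := Function.argminOn_mem f P hP
  refine ⟨S, fun m => ?_⟩
  by_contra! hm
  have hmS : m ∉ S := fun h => hm m h (by simpa using h0)
  have hT : insert m S ∈ P := by
    intro s hs t ht hst
    rcases Finset.mem_insert.mp hs with rfl | hsS <;> rcases Finset.mem_insert.mp ht with rfl | htS
    · exact absurd rfl hst
    · exact hm t htS
    · exact fun h => hm s hsS (by simpa using hneg _ h)
    · exact hS s hsS t htS hst
  have hmin : f S ≤ f (insert m S) := Function.argminOn_le f P hT
  have hcard := Finset.card_insert_of_notMem hmS
  have hlt := hk _ hT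
  simp only [f] at hmin
  omega

theorem stmt_13
    (hZhang : ∃ k : ℕ, 2 ≤ k ∧ ∀ x : Fin k → ℤ, Function.Injective x → AdmissibleTuple x →
      ∃ i j : Fin k, x i ≠ x j ∧ {n : ℤ | Prime (n + x i) ∧ Prime (n + x j)}.Infinite) :
    ∃ C : ℝ, 0 < C ∧ ∀ x : ℝ, ∃ h : ℤ, DePolignac h ∧ x < h ∧ (h : ℝ) ≤ x + C := by
  obtain ⟨k, -, hk⟩ := hZhang
  have hM : (0 : ℝ) < k.factorial := by exact_mod_cast k.factorial_pos
  have hMz : (k.factorial : ℤ) ≠ 0 := by exact_mod_cast k.factorial_ne_zero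
  obtain ⟨S, hS⟩ := exists_finset_forall_exists_sub
    (D := fun d => DePolignac ((k.factorial : ℤ) * d)) (k := k)
    (by simpa using depolignac_zero) (fun d hd => by simpa using hd.neg) (by
      intro S hS
      by_contra! hcard
      obtain ⟨T, hTS, hT⟩ := Finset.exists_subset_card_eq hcard
      let y := T.orderEmbOfFin hT
      have hy : ∀ i, y i ∈ S := fun i => hTS (T.orderEmbOfFin_mem hT i)
      obtain ⟨i, j, hij, hinf⟩ := hk (fun i => (k.factorial : ℤ) * y i)
        ((mul_right_injective₀ hMz).comp y.injective) (admissibleTuple_factorial_mul _)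
      refine hS (y j) (hy j) (y i) (hy i) (fun h => hij (by simp [h])) ?_
      simpa only [mul_sub] using depolignac_sub_of_infinite hinf)
  obtain ⟨B, hB⟩ : ∃ B : ℕ, ∀ s ∈ S, s.natAbs ≤ B :=
    ⟨S.sup Int.natAbs, fun s hs => Finset.le_sup (f := Int.natAbs) hs⟩
  refine ⟨k.factorial * (1 + 2 * B), by positivity, fun x => ?_⟩
  obtain ⟨s, hs, hd⟩ := hS (⌊x / k.factorial⌋ + 1 + B)
  refine ⟨_, hd, ?_⟩
  have hsB := hB s hs
  have hs_le : (s : ℝ) ≤ B := by exact_mod_cast (by omega : s ≤ B)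
  have hle_s : -(B : ℝ) ≤ s := by exact_mod_cast (by omega : -(B : ℤ) ≤ s)
  have hx : x = k.factorial * (x / k.factorial) := by field_simp
  have hlt := Int.lt_floor_add_one (x / k.factorial)
  have hle := Int.floor_le (x / k.factorial)
  push_cast
  constructor
  · calc x = k.factorial * (x / k.factorial) := hx
      _ < _ := mul_lt_mul_of_pos_left (by linarith) hM
  · calc _ ≤ k.factorial * (x / k.factorial + (1 + 2 * B)) :=
          mul_le_mul_of_nonneg_left (by linarith) hM.le
      _ = _ := by rw [mul_add, ← hx]
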